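/- Let u : ℝ → ℝ be C⁴ near a point x₀ with u'(x₀) ≠ 0, and let A(Δx) denote the three-point Gaussian-RBF reconstruction of u(x₀) from the cell averages over [x₀−2Δx, x₀−Δx], [x₀−Δx, x₀], [x₀, x₀+Δx] (constructed via the primitive function as in the paper), with shape parameter λ. Then A(Δx) = u(x₀) + Δx³(λ²u'(x₀) + u'''(x₀)/12) + O(Δx⁴); consequently, choosing λ² = −u'''(x₀)/(12u'(x₀)) (when this quantity is nonnegative) yields A(Δx) = u(x₀) + O(Δx⁴). -/

import Mathlib

open Real intervalIntegral

/-!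
Up to constants and the common factor `exp (-λ²x²)`, the Gaussians centred at the nodes of a grid
of step `h` are consecutive powers of `z = exp (2 λ² h x)`, so Gaussian interpolation at four nodes
is Lagrange interpolation in `z`. Hence the derivative of the interpolant at a node is an explicit
combination of the nodal values, whose weights are, up to the factor `1 / h`, products of
exponentials and of values of `sinh x / x` (and inverses of these) at multiples of `t = λ² h²`.
Replacing the weights by their linearization in `t` and the primitive by its quartic Taylor
polynomial costs `O(h⁵)`, and what remains is a polynomial identity; dividing by `h` gives the
expansion.
-/

open Asymptotics Filter Set
open MeasureTheory (volume)
open scoped Interval Nat Topology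

section Taylor

variable {E : Type*} [NormedAddCommGroup E] {f : ℝ → E} {x₀ : ℝ} {n : ℕ}

lemma eventually_intervalIntegrable (hf : ∀ᶠ x in 𝓝 x₀, ContinuousAt f x) :
    ∀ᶠ x in 𝓝 x₀, IntervalIntegrable f volume x₀ x := by
  obtain ⟨r, hr, hball⟩ := Metric.eventually_nhds_iff_ball.1 hf
  filter_upwards [Metric.ball_mem_nhds x₀ hr] with x hx
  refine ContinuousOn.intervalIntegrable fun ξ hξ ↦ ?_
  exact (hball ξ ((convex_ball x₀ r).ordConnected.uIcc_subset
    (Metric.mem_ball_self hr) hx hξ)).continuousWithinAt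

variable [NormedSpace ℝ E]

lemma taylor_isBigO_of_contDiffAt (hf : ContDiffAt ℝ n f x₀) :
    (fun x ↦ f x - ∑ k ∈ Finset.range n, ((x - x₀) ^ k / k !) • iteratedDeriv k f x₀)
      =O[𝓝 x₀] fun x ↦ (x - x₀) ^ n := by
  obtain ⟨s, hs, hfs⟩ := hf.contDiffOn le_rfl (by simp)
  obtain ⟨r, hr, hrs⟩ := Metric.mem_nhds_iff.1 hs
  have hx₀ : x₀ ∈ Metric.ball x₀ r := Metric.mem_ball_self hr
  have htaylor := taylor_isLittleO (convex_ball x₀ r) hx₀ (hfs.mono hrs)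
  rw [Metric.isOpen_ball.nhdsWithin_eq hx₀] at htaylor
  have hlast : (fun x ↦ ((x - x₀) ^ n / n !) • iteratedDeriv n f x₀)
      =O[𝓝 x₀] fun x ↦ (x - x₀) ^ n := by
    refine .of_bound ‖(n ! : ℝ)⁻¹ • iteratedDeriv n f x₀‖ (.of_forall fun x ↦ ?_)
    rw [div_eq_mul_inv, mul_smul, norm_smul, mul_comm]
  refine (htaylor.isBigO.add hlast).congr_left fun x ↦ ?_
  simp only [taylor_within_apply, Finset.sum_range_succ,
    iteratedDerivWithin_of_isOpen Metric.isOpen_ball hx₀, div_eq_inv_mul]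
  abel

lemma integral_isBigO_pow_succ (hf : f =O[𝓝 x₀] fun x ↦ (x - x₀) ^ n) :
    (fun x ↦ ∫ ξ in x₀..x, f ξ) =O[𝓝 x₀] fun x ↦ (x - x₀) ^ (n + 1) := by
  obtain ⟨C, hC, hfC⟩ := hf.exists_nonneg
  obtain ⟨r, hr, hball⟩ := Metric.eventually_nhds_iff_ball.1 hfC.bound
  refine IsBigO.of_bound C ?_
  filter_upwards [Metric.ball_mem_nhds x₀ hr] with x hx
  have hbound : ∀ ξ ∈ Ι x₀ x, ‖f ξ‖ ≤ C * |x - x₀| ^ n := fun ξ hξ ↦ by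
    have hξx : |ξ - x₀| ≤ |x - x₀| := abs_sub_left_of_mem_uIcc (uIoc_subset_uIcc hξ)
    calc ‖f ξ‖ ≤ C * ‖(ξ - x₀) ^ n‖ := hball ξ (hξx.trans_lt hx)
      _ ≤ C * |x - x₀| ^ n := by rw [norm_pow, Real.norm_eq_abs]; gcongr
  calc ‖∫ ξ in x₀..x, f ξ‖ ≤ C * |x - x₀| ^ n * |x - x₀| :=
        norm_integral_le_of_norm_le_const hbound
    _ = C * ‖(x - x₀) ^ (n + 1)‖ := by rw [norm_pow, Real.norm_eq_abs, pow_succ, mul_assoc]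

lemma eventually_intervalIntegrable_of_contDiffAt (hf : ContDiffAt ℝ n f x₀) :
    ∀ᶠ x in 𝓝 x₀, IntervalIntegrable f volume x₀ x :=
  eventually_intervalIntegrable ((hf.eventually (by simp)).mono fun _ ↦ ContDiffAt.continuousAt)

lemma integral_sub_pow_div_factorial (a b : ℝ) (k : ℕ) :
    ∫ x in a..b, (x - a) ^ k / k ! = (b - a) ^ (k + 1) / (k + 1)! := by
  rw [integral_div, integral_comp_sub_right (· ^ k) a, integral_pow, sub_self,
    zero_pow k.succ_ne_zero, sub_zero, div_div, Nat.factorial_succ]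
  push_cast
  rfl

lemma integral_taylor_isBigO_of_contDiffAt [CompleteSpace E] (hf : ContDiffAt ℝ n f x₀) :
    (fun x ↦ (∫ ξ in x₀..x, f ξ) -
        ∑ k ∈ Finset.range n, ((x - x₀) ^ (k + 1) / (k + 1)!) • iteratedDeriv k f x₀)
      =O[𝓝 x₀] fun x ↦ (x - x₀) ^ (n + 1) := by
  refine (integral_isBigO_pow_succ (taylor_isBigO_of_contDiffAt hf)).congr' ?_ .rfl
  filter_upwards [eventually_intervalIntegrable_of_contDiffAt hf] with x hx
  have hterm (k : ℕ) : IntervalIntegrable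
      (fun ξ ↦ ((ξ - x₀) ^ k / k !) • iteratedDeriv k f x₀) volume x₀ x :=
    Continuous.intervalIntegrable (by fun_prop) _ _
  rw [integral_sub hx (Continuous.intervalIntegrable (by fun_prop) _ _),
    integral_finsetSum fun k _ ↦ hterm k]
  simp only [intervalIntegral.integral_smul_const, integral_sub_pow_div_factorial]

lemma integral_taylor_scaled_isBigO_of_contDiffAt [CompleteSpace E] (hf : ContDiffAt ℝ n f x₀)
    (a b : ℝ) :
    (fun h ↦ (∫ ξ in x₀ + a * h..x₀ + b * h, f ξ) -
        ∑ k ∈ Finset.range n,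
          (((b * h) ^ (k + 1) - (a * h) ^ (k + 1)) / (k + 1)!) • iteratedDeriv k f x₀)
      =O[𝓝 0] fun h ↦ h ^ (n + 1) := by
  have hscale (c : ℝ) : Tendsto (fun h ↦ x₀ + c * h) (𝓝 0) (𝓝 x₀) :=
    Continuous.tendsto' (by fun_prop) 0 x₀ (by simp)
  have hprimitive (c : ℝ) :
      (fun h ↦ (∫ ξ in x₀..x₀ + c * h, f ξ) -
          ∑ k ∈ Finset.range n, ((c * h) ^ (k + 1) / (k + 1)!) • iteratedDeriv k f x₀)
        =O[𝓝 0] fun h ↦ h ^ (n + 1) := by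
    have htaylor := (integral_taylor_isBigO_of_contDiffAt hf).comp_tendsto (hscale c)
    exact (htaylor.congr_left fun h ↦ by simp).trans
      (.of_bound (|c| ^ (n + 1)) (.of_forall fun h ↦ by simp [mul_pow]))
  have hint := eventually_intervalIntegrable_of_contDiffAt hf
  refine ((hprimitive b).sub (hprimitive a)).congr' ?_ .rfl
  filter_upwards [(hscale a).eventually hint, (hscale b).eventually hint] with h ha hb
  rw [sub_sub_sub_comm, integral_interval_sub_left hb ha, ← Finset.sum_sub_distrib]
  simp only [sub_div, sub_smul]

end Taylor

section Sinhc

/-- The function `sinh x / x`, with the removable singularity at `0` filled in. It makes the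
differentiation weights meaningful also for the shape parameter `0`. -/
noncomputable def sinhc (x : ℝ) : ℝ := dslope sinh 0 x

lemma mul_sinhc (x : ℝ) : x * sinhc x = sinh x := by
  simpa [sinhc] using sub_smul_dslope_of_zero sinh_zero x

lemma sinhc_zero : sinhc 0 = 1 := by simp [sinhc]

lemma sinhc_of_ne_zero {x : ℝ} (hx : x ≠ 0) : sinhc x = sinh x / x := by
  rw [← mul_sinhc, mul_div_cancel_left₀ _ hx]

lemma sinh_sub_self_isBigO : (fun x ↦ sinh x - x) =O[𝓝 0] fun x ↦ x ^ 3 := by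
  have hexp := Real.exp_sub_sum_range_isBigO_pow 3
  have hneg : (fun x : ℝ ↦ exp (-x) - ∑ i ∈ Finset.range 3, (-x) ^ i / i !)
      =O[𝓝 0] fun x ↦ x ^ 3 :=
    (hexp.comp_tendsto (continuous_neg.tendsto' 0 0 neg_zero)).trans
      (.of_bound 1 (.of_forall fun x ↦ by simp))
  refine ((hexp.sub hneg).const_mul_left (1 / 2)).congr_left fun x ↦ ?_
  simp only [Finset.sum_range_succ, Finset.range_zero, Finset.sum_empty, sinh_eq, Nat.factorial]
  push_cast
  ring

lemma sinhc_sub_one_isBigO : (fun x ↦ sinhc x - 1) =O[𝓝 0] fun x ↦ x ^ 2 := by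
  obtain ⟨C, hC⟩ := sinh_sub_self_isBigO.bound
  refine IsBigO.of_bound C (hC.mono fun x hx ↦ ?_)
  rcases eq_or_ne x 0 with rfl | hx₀
  · simp [sinhc_zero]
  rw [← mul_sinhc, show x * sinhc x - x = x * (sinhc x - 1) by ring, pow_succ', norm_mul, norm_mul,
    mul_left_comm] at hx
  exact le_of_mul_le_mul_left hx (norm_pos_iff.2 hx₀)

lemma sinhc_nat_mul {t : ℝ} (ht : t ≠ 0) {n : ℕ} (hn : n ≠ 0) :
    sinhc (n * t) = (exp t ^ (2 * n) - 1) / (2 * n * t * exp t ^ n) := by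
  have hn' : (n : ℝ) ≠ 0 := Nat.cast_ne_zero.2 hn
  rw [sinhc_of_ne_zero (mul_ne_zero hn' ht), sinh_eq, exp_neg, exp_nat_mul]
  field_simp
  ring

end Sinhc

/-- The weights expressing the derivative at `2` of the combination of the Gaussians
`exp (-t * (x - k) ^ 2)`, `k = 0, 1, 2, 3`, through its values at these four nodes. They come from
Lagrange interpolation in `exp (2 * t * x)`; at `t = 0` they are the weights of cubic
interpolation. -/
noncomputable def gaussianDiffWeight (t : ℝ) : Fin 4 → ℝ :=
  ![exp (2 * t) * sinhc t * (sinhc (2 * t))⁻¹ * (sinhc (3 * t))⁻¹ / 6,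
    -(sinhc t)⁻¹,
    exp (-2 * t) * (sinhc (2 * t))⁻¹ / 2,
    exp (2 * t) * (sinhc (3 * t))⁻¹ / 3]

lemma gaussianDiffWeight_of_ne_zero {t : ℝ} (ht : t ≠ 0) :
    gaussianDiffWeight t =
      ![2 * t * exp t ^ 6 * (exp t ^ 2 - 1) / ((exp t ^ 4 - 1) * (exp t ^ 6 - 1)),
        -(2 * t * exp t / (exp t ^ 2 - 1)),
        2 * t / (exp t ^ 4 - 1),
        2 * t * exp t ^ 5 / (exp t ^ 6 - 1)] := by
  have hsinhc₁ : sinhc t = (exp t ^ 2 - 1) / (2 * t * exp t) := by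
    simpa using sinhc_nat_mul ht one_ne_zero
  have hsinhc₂ := sinhc_nat_mul ht two_ne_zero
  have hsinhc₃ := sinhc_nat_mul ht three_ne_zero
  have hexp : exp (2 * t) = exp t ^ 2 := exp_nat_mul t 2
  have hexp_neg : exp (-2 * t) = (exp t ^ 2)⁻¹ := by rw [neg_mul, exp_neg, hexp]
  push_cast at hsinhc₂ hsinhc₃
  simp only [gaussianDiffWeight, hsinhc₁, hsinhc₂, hsinhc₃, hexp, hexp_neg, Matrix.vecCons_inj]
  refine ⟨?_, ?_, ?_, ?_, trivial⟩ <;> field_simp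
  ring

lemma sum_gaussianDiffWeight_mul_exp (t : ℝ) (k : Fin 4) :
    ∑ i : Fin 4, gaussianDiffWeight t i * exp (-t * ((i : ℝ) - k) ^ 2) =
      -2 * t * (2 - k) * exp (-t * (2 - k) ^ 2) := by
  rcases eq_or_ne t 0 with rfl | ht
  · simp only [gaussianDiffWeight, Fin.sum_univ_four, Matrix.cons_val]
    norm_num [sinhc_zero]
  have hexp_neg (n : ℕ) : exp (-(t * n)) = (exp t ^ n)⁻¹ := by
    rw [exp_neg, mul_comm, exp_nat_mul]
  have hexp_neg₄ : exp (-(t * 4)) = (exp t ^ 4)⁻¹ := hexp_neg 4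
  have hexp_neg₉ : exp (-(t * 9)) = (exp t ^ 9)⁻¹ := hexp_neg 9
  have hsub {n : ℕ} (hn : n ≠ 0) : exp t ^ n - 1 ≠ 0 := by
    rw [sub_ne_zero, ← exp_nat_mul, Ne, exp_eq_one_iff]
    positivity
  have hsub₂ := hsub two_ne_zero
  have hsub₄ := hsub four_ne_zero
  have hsub₆ := hsub (n := 6) (by decide)
  simp only [gaussianDiffWeight_of_ne_zero ht, Fin.sum_univ_four, Matrix.cons_val]
  fin_cases k <;> norm_num [exp_neg t, hexp_neg₄, hexp_neg₉] <;> field_simp <;> ring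

lemma sum_mul_gaussian_deriv_eq_sum_gaussianDiffWeight_mul {t : ℝ} {α V : Fin 4 → ℝ}
    (hα : ∀ i : Fin 4, ∑ k : Fin 4, α k * exp (-t * ((i : ℝ) - k) ^ 2) = V i) :
    ∑ k : Fin 4, α k * (-2 * t * (2 - k) * exp (-t * (2 - k) ^ 2)) =
      ∑ i, gaussianDiffWeight t i * V i := by
  simp only [← hα, ← sum_gaussianDiffWeight_mul_exp, Finset.mul_sum]
  rw [Finset.sum_comm]
  exact Finset.sum_congr rfl fun i _ ↦ Finset.sum_congr rfl fun k _ ↦ mul_left_comm _ _ _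

section Asymptotics

variable {β 𝕜 : Type*} [NormedField 𝕜] {l : Filter β} {f g p e : β → 𝕜}

lemma isBigO_mul_sub_of_sub_one (hf : (fun x ↦ f x - p x) =O[l] e) (hp : p =O[l] fun _ ↦ (1 : 𝕜))
    (hg : (fun x ↦ g x - 1) =O[l] e) (he : e =O[l] fun _ ↦ (1 : 𝕜)) :
    (fun x ↦ f x * g x - p x) =O[l] e := by
  have hg₁ : g =O[l] fun _ ↦ (1 : 𝕜) := by
    simpa using (hg.trans he).add (isBigO_refl (fun _ ↦ (1 : 𝕜)) l)
  have hfg : (fun x ↦ (f x - p x) * g x) =O[l] e := by simpa using hf.mul hg₁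
  have hpg : (fun x ↦ p x * (g x - 1)) =O[l] e := by simpa using hp.mul hg
  exact (hfg.add hpg).congr_left fun x ↦ by ring

lemma isBigO_inv_sub_one (hg : (fun x ↦ g x - 1) =O[l] e) (he : Tendsto e l (𝓝 0)) :
    (fun x ↦ (g x)⁻¹ - 1) =O[l] e := by
  have hg₁ : Tendsto g l (𝓝 1) := tendsto_sub_nhds_zero_iff.1 (hg.trans_tendsto he)
  have hinv : (fun x ↦ (g x)⁻¹) =O[l] fun _ ↦ (1 : 𝕜) := (hg₁.inv₀ one_ne_zero).isBigO_one 𝕜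
  have hmul : (fun x ↦ -(g x)⁻¹ * (g x - 1)) =O[l] e := by simpa using hinv.neg_left.mul hg
  refine hmul.congr' ?_ .rfl
  filter_upwards [hg₁.eventually_ne one_ne_zero] with x hx
  field_simp
  ring

lemma isBigO_sum_mul_sub_sum_mul {ι : Type*} {s : Finset ι} {w v V P : ι → β → 𝕜}
    (hw : ∀ i ∈ s, (fun x ↦ w i x - v i x) =O[l] e) (hV : ∀ i ∈ s, V i =O[l] g)
    (hv : ∀ i ∈ s, v i =O[l] fun _ ↦ (1 : 𝕜))
    (hVP : ∀ i ∈ s, (fun x ↦ V i x - P i x) =O[l] fun x ↦ e x * g x) :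
    (fun x ↦ ∑ i ∈ s, w i x * V i x - ∑ i ∈ s, v i x * P i x) =O[l] fun x ↦ e x * g x := by
  simp only [← Finset.sum_sub_distrib]
  refine IsBigO.fun_sum fun i hi ↦ ?_
  have hvVP := ((hv i hi).mul (hVP i hi)).congr_right fun x ↦ one_mul (e x * g x)
  exact (((hw i hi).mul (hV i hi)).add hvVP).congr_left fun x ↦ by ring

lemma isBigO_nhdsGT_zero_pow_iff {f : ℝ → ℝ} {n : ℕ} :
    f =O[𝓝[>] 0] (fun h ↦ h ^ n) ↔
      ∃ C > 0, ∃ δ > 0, ∀ h : ℝ, 0 < h → h < δ → |f h| ≤ C * h ^ n := by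
  have hbound (C : ℝ) : (∀ᶠ h in 𝓝[>] 0, ‖f h‖ ≤ C * ‖h ^ n‖) ↔
      ∃ δ > 0, ∀ h : ℝ, 0 < h → h < δ → |f h| ≤ C * h ^ n := by
    rw [(nhdsGT_basis (0 : ℝ)).eventually_iff]
    refine exists_congr fun δ ↦ and_congr_right fun _ ↦ ?_
    simp only [mem_Ioo, and_imp]
    refine forall₂_congr fun h hh ↦ ?_
    rw [norm_pow, Real.norm_of_nonneg hh.le, Real.norm_eq_abs]
  simp only [isBigO_iff', hbound]

end Asymptotics

lemma exp_const_mul_sub_isBigO (c : ℝ) :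
    (fun t ↦ exp (c * t) - (1 + c * t)) =O[𝓝 0] fun t ↦ t ^ 2 := by
  have hexp := (Real.exp_sub_sum_range_isBigO_pow 2).comp_tendsto
    ((continuous_const_mul c).tendsto' 0 0 (mul_zero c))
  refine (hexp.trans ?_).congr_left fun t ↦ by simp [Finset.sum_range_succ]
  exact .of_bound (c ^ 2) (.of_forall fun t ↦ by simp [mul_pow])

/-- The linearization of `gaussianDiffWeight` at `t = 0`. -/
noncomputable def gaussianDiffWeightLin (t : ℝ) : Fin 4 → ℝ :=
  ![1 / 6 + t / 3, -1, 1 / 2 - t, 1 / 3 + 2 * t / 3]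

lemma continuous_gaussianDiffWeightLin (i : Fin 4) :
    Continuous fun t ↦ gaussianDiffWeightLin t i := by
  fin_cases i <;> simp only [gaussianDiffWeightLin, Fin.zero_eta, Fin.mk_one, Fin.reduceFinMk,
    Matrix.cons_val] <;> fun_prop

lemma gaussianDiffWeight_sub_lin_isBigO (i : Fin 4) :
    (fun t ↦ gaussianDiffWeight t i - gaussianDiffWeightLin t i) =O[𝓝 0] fun t ↦ t ^ 2 := by
  have hsq : Tendsto (fun t : ℝ ↦ t ^ 2) (𝓝 0) (𝓝 0) := (continuous_pow 2).tendsto' 0 0 (by simp)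
  have hsinhc (c : ℝ) : (fun t ↦ sinhc (c * t) - 1) =O[𝓝 0] fun t ↦ t ^ 2 :=
    (sinhc_sub_one_isBigO.comp_tendsto
      ((continuous_const_mul c).tendsto' 0 0 (mul_zero c))).trans
      (.of_bound (c ^ 2) (.of_forall fun t ↦ by simp [mul_pow]))
  have hsinhc_inv (c : ℝ) := isBigO_inv_sub_one (hsinhc c) hsq
  have hlin (c : ℝ) : (fun t : ℝ ↦ 1 + c * t) =O[𝓝 0] fun _ ↦ (1 : ℝ) :=
    (Continuous.tendsto (by fun_prop) 0).isBigO_one ℝ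
  have hmul (c d : ℝ) := isBigO_mul_sub_of_sub_one (exp_const_mul_sub_isBigO c) (hlin c)
    (hsinhc_inv d) (hsq.isBigO_one ℝ)
  fin_cases i
  · have hmul₂₃ := isBigO_mul_sub_of_sub_one (hmul 2 2) (hlin 2) (hsinhc_inv 3)
      (hsq.isBigO_one ℝ)
    have hweight := isBigO_mul_sub_of_sub_one hmul₂₃ (hlin 2) (hsinhc 1) (hsq.isBigO_one ℝ)
    refine (hweight.const_mul_left (1 / 6)).congr_left fun t ↦ ?_
    simp only [gaussianDiffWeight, gaussianDiffWeightLin, Fin.zero_eta, Matrix.cons_val, one_mul]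
    ring
  · refine (hsinhc_inv 1).neg_left.congr_left fun t ↦ ?_
    simp only [gaussianDiffWeight, gaussianDiffWeightLin, Fin.mk_one, Matrix.cons_val, one_mul]
    ring
  · refine ((hmul (-2) 2).const_mul_left (1 / 2)).congr_left fun t ↦ ?_
    simp only [gaussianDiffWeight, gaussianDiffWeightLin, Fin.reduceFinMk, Matrix.cons_val]
    ring
  · refine ((hmul 2 3).const_mul_left (1 / 3)).congr_left fun t ↦ ?_
    simp only [gaussianDiffWeight, gaussianDiffWeightLin, Fin.reduceFinMk, Matrix.cons_val]
    ring

lemma sum_gaussianDiffWeightLin_mul_taylor (d : ℕ → ℝ) (L h : ℝ) :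
    ∑ i : Fin 4, gaussianDiffWeightLin (L * h ^ 2) i *
        ∑ k ∈ Finset.range 4,
          ((((i : ℝ) - 2) * h) ^ (k + 1) - (-2 * h) ^ (k + 1)) / (k + 1)! * d k =
      h * (d 0 + h ^ 3 * (L * d 1 + d 3 / 12)) + h ^ 5 * (L * (h * d 3 / 4 - d 2 / 3)) := by
  simp only [gaussianDiffWeightLin, Fin.sum_univ_four, Matrix.cons_val, Finset.sum_range_succ,
    Finset.sum_range_zero, Nat.factorial]
  norm_num
  ring

lemma sum_gaussianDiffWeight_mul_integral_isBigO {u : ℝ → ℝ} {x₀ : ℝ} (hu : ContDiffAt ℝ 4 u x₀)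
    (L : ℝ) :
    (fun h ↦ ∑ i : Fin 4, gaussianDiffWeight (L * h ^ 2) i *
          (∫ ξ in x₀ + -2 * h..x₀ + ((i : ℝ) - 2) * h, u ξ) -
        h * (u x₀ + h ^ 3 * (L * deriv u x₀ + iteratedDeriv 3 u x₀ / 12)))
      =O[𝓝 0] fun h ↦ h ^ 5 := by
  set w : Fin 4 → ℝ → ℝ := fun i h ↦ gaussianDiffWeight (L * h ^ 2) i
  set v : Fin 4 → ℝ → ℝ := fun i h ↦ gaussianDiffWeightLin (L * h ^ 2) i
  set V : Fin 4 → ℝ → ℝ := fun i h ↦ ∫ ξ in x₀ + -2 * h..x₀ + ((i : ℝ) - 2) * h, u ξ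
  set P : Fin 4 → ℝ → ℝ := fun i h ↦ ∑ k ∈ Finset.range 4,
    ((((i : ℝ) - 2) * h) ^ (k + 1) - (-2 * h) ^ (k + 1)) / (k + 1)! * iteratedDeriv k u x₀
  have hscale : Tendsto (fun h : ℝ ↦ L * h ^ 2) (𝓝 0) (𝓝 0) :=
    Continuous.tendsto' (by fun_prop) 0 0 (by simp)
  have hw (i : Fin 4) : (fun h ↦ w i h - v i h) =O[𝓝 0] fun h ↦ h ^ 4 :=
    ((gaussianDiffWeight_sub_lin_isBigO i).comp_tendsto hscale).trans
      (.of_bound (L ^ 2) (.of_forall fun h ↦ by simp [mul_pow, ← pow_mul]))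
  have hv (i : Fin 4) : v i =O[𝓝 0] fun _ ↦ (1 : ℝ) :=
    (((continuous_gaussianDiffWeightLin i).tendsto 0).comp hscale).isBigO_one ℝ
  have hV (i : Fin 4) : V i =O[𝓝 0] fun h ↦ h := by
    simpa [V] using integral_taylor_scaled_isBigO_of_contDiffAt (n := 0)
      (hu.of_le (by simp)) (-2) ((i : ℝ) - 2)
  have hVP (i : Fin 4) : (fun h ↦ V i h - P i h) =O[𝓝 0] fun h ↦ h ^ 4 * h :=
    integral_taylor_scaled_isBigO_of_contDiffAt (n := 4) hu (-2) ((i : ℝ) - 2)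
  have hrem : (fun h ↦ h ^ 5 * (L * (h * iteratedDeriv 3 u x₀ / 4 - iteratedDeriv 2 u x₀ / 3)))
      =O[𝓝 0] fun h ↦ h ^ 5 := by
    have hcont : Continuous fun h : ℝ ↦
      L * (h * iteratedDeriv 3 u x₀ / 4 - iteratedDeriv 2 u x₀ / 3) := by fun_prop
    simpa using (isBigO_refl (fun h : ℝ ↦ h ^ 5) (𝓝 0)).mul ((hcont.tendsto 0).isBigO_one ℝ)
  have hmodel := isBigO_sum_mul_sub_sum_mul (s := Finset.univ) (fun i _ ↦ hw i) (fun i _ ↦ hV i)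
    (fun i _ ↦ hv i) (fun i _ ↦ hVP i)
  refine (hmodel.add hrem).congr_left fun h ↦ ?_
  have hsum := sum_gaussianDiffWeightLin_mul_taylor (iteratedDeriv · u x₀) L h
  simp only [iteratedDeriv_zero, iteratedDeriv_one] at hsum
  rw [hsum]
  ring

lemma gaussian_reconstruction_sub_isBigO {u : ℝ → ℝ} {x₀ : ℝ} (hu : ContDiffAt ℝ 4 u x₀) {L : ℝ}
    {α : ℝ → Fin 4 → ℝ}
    (hα : ∀ h, 0 < h → ∀ i : Fin 4, ∑ k : Fin 4, α h k * exp (-L * (((i : ℝ) - k) * h) ^ 2) =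
      ∫ ξ in x₀ + -2 * h..x₀ + ((i : ℝ) - 2) * h, u ξ) :
    (fun h ↦ ∑ k : Fin 4, α h k * (-2 * L * ((2 - k) * h) * exp (-L * ((2 - k) * h) ^ 2)) -
        u x₀ - h ^ 3 * (L * deriv u x₀ + iteratedDeriv 3 u x₀ / 12))
      =O[𝓝[>] 0] fun h ↦ h ^ 4 := by
  have hdiv := (isBigO_refl (fun h : ℝ ↦ h⁻¹) (𝓝[>] 0)).mul
    ((sum_gaussianDiffWeight_mul_integral_isBigO hu L).mono nhdsWithin_le_nhds)
  refine hdiv.congr' ?_ ?_ <;> filter_upwards [self_mem_nhdsWithin] with h (hh : 0 < h)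
  · have hexponent (s : ℝ) : -L * (s * h) ^ 2 = -(L * h ^ 2) * s ^ 2 := by ring
    have hnodal := hα h hh
    simp only [hexponent] at hnodal ⊢
    rw [← sum_mul_gaussian_deriv_eq_sum_gaussianDiffWeight_mul hnodal, mul_sub, Finset.mul_sum,
      inv_mul_cancel_left₀ hh.ne', sub_sub]
    congr 1
    refine Finset.sum_congr rfl fun k _ ↦ ?_
    field_simp
  · field_simp

/-- `L` plays the role of `λ²`; negative values amount to an imaginary shape parameter. -/
theorem stmt_9_general (u : ℝ → ℝ) (x₀ : ℝ) (hu : ContDiffAt ℝ 4 u x₀) (L : ℝ)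
    (U : ℝ → ℝ → ℝ) (hU : ∀ dx x, U dx x = ∫ ξ in (x₀ - 2 * dx)..x, u ξ)
    (p : ℝ → Fin 4 → ℝ) (hp : ∀ dx k, p dx k = x₀ + ((k : ℤ) - 2 : ℤ) * dx)
    (α : ℝ → Fin 4 → ℝ)
    (hα : ∀ dx, 0 < dx → ∀ i,
      ∑ k, α dx k * exp (-L * (p dx i - p dx k) ^ 2) = U dx (p dx i))
    (A : ℝ → ℝ)
    (hA : ∀ dx, A dx =
      ∑ k, α dx k * (-2 * L * (x₀ - p dx k) * exp (-L * (x₀ - p dx k) ^ 2))) :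
    (∃ C > 0, ∃ δ > 0, ∀ dx : ℝ, 0 < dx → dx < δ →
      |A dx - u x₀ - dx ^ 3 * (L * deriv u x₀ + iteratedDeriv 3 u x₀ / 12)| ≤ C * dx ^ 4) ∧
    (L * deriv u x₀ + iteratedDeriv 3 u x₀ / 12 = 0 →
      ∃ C > 0, ∃ δ > 0, ∀ dx : ℝ, 0 < dx → dx < δ → |A dx - u x₀| ≤ C * dx ^ 4) := by
  have hp_sub (dx : ℝ) (i k : Fin 4) : p dx i - p dx k = ((i : ℝ) - k) * dx := by
    simp only [hp]
    push_cast
    ring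
  have hx₀_sub (dx : ℝ) (k : Fin 4) : x₀ - p dx k = (2 - k) * dx := by
    simp only [hp]
    push_cast
    ring
  have hU_node (dx : ℝ) (i : Fin 4) :
      U dx (p dx i) = ∫ ξ in x₀ + -2 * dx..x₀ + ((i : ℝ) - 2) * dx, u ξ := by
    rw [hU, hp, sub_eq_add_neg, ← neg_mul]
    push_cast
    rfl
  simp only [hp_sub, hU_node] at hα
  have hexpansion := isBigO_nhdsGT_zero_pow_iff.1 (gaussian_reconstruction_sub_isBigO hu hα)
  simp only [← hx₀_sub, ← hA] at hexpansion
  exact ⟨hexpansion, fun hL ↦ by simpa only [hL, mul_zero, sub_zero] using hexpansion⟩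

/-- Three-point Gaussian-RBF primitive-function reconstruction (Theorem A.1, N = 3):
the coefficients `α dx` interpolate the primitive `U` at the four interfaces
`x₀ + ℓ·dx`, `ℓ = -2,…,1`, with Gaussian basis `φ(t) = exp(-λ²t²)`, and the
reconstruction is `A dx = Σ_k α dx k · φ'(x₀ - p k)`. -/
theorem stmt_9 (u : ℝ → ℝ) (x₀ ε : ℝ) (hε : 0 < ε)
    (hu : ContDiffOn ℝ 4 u (Metric.ball x₀ ε)) (hu' : deriv u x₀ ≠ 0) (lam : ℝ)
    (U : ℝ → ℝ → ℝ) (hU : ∀ dx x, U dx x = ∫ ξ in (x₀ - 2 * dx)..x, u ξ)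
    (p : ℝ → Fin 4 → ℝ) (hp : ∀ dx k, p dx k = x₀ + ((k : ℤ) - 2 : ℤ) * dx)
    (α : ℝ → Fin 4 → ℝ)
    (hα : ∀ dx, 0 < dx → ∀ i,
      ∑ k, α dx k * Real.exp (-lam ^ 2 * (p dx i - p dx k) ^ 2) = U dx (p dx i))
    (A : ℝ → ℝ)
    (hA : ∀ dx, A dx =
      ∑ k, α dx k * (-2 * lam ^ 2 * (x₀ - p dx k) *
        Real.exp (-lam ^ 2 * (x₀ - p dx k) ^ 2))) :
    (∃ C > 0, ∃ δ > 0, ∀ dx : ℝ, 0 < dx → dx < δ →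
      |A dx - u x₀ - dx ^ 3 * (lam ^ 2 * deriv u x₀ + iteratedDeriv 3 u x₀ / 12)|
        ≤ C * dx ^ 4) ∧
    (lam ^ 2 = -iteratedDeriv 3 u x₀ / (12 * deriv u x₀) →
      ∃ C > 0, ∃ δ > 0, ∀ dx : ℝ, 0 < dx → dx < δ →
        |A dx - u x₀| ≤ C * dx ^ 4) := by
  have h := stmt_9_general u x₀ (hu.contDiffAt (Metric.ball_mem_nhds x₀ hε)) (lam ^ 2)
    U hU p hp α hα A hA
  exact ⟨h.1, fun hlam ↦ h.2 (by rw [hlam]; field_simp; ring)⟩
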